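/- arXiv:2502.01950 — 2 statements merged into one kernel-verified Lean document; each statement's English description precedes it below -/
import Mathlib

section
/- Let G be a finite group with an irreducible character χ achieving the maximal codegree among all irreducible characters of G, and suppose G is not nilpotent (equivalently G > F(G)). If G is solvable, then ker(χ) is strictly contained in F(G). -/
open CategoryTheory

/-- The kernel of (the character of) a finite-dimensional complex representation. -/
noncomputable def charKer {G : Type} [Group G] (V : FDRep ℂ G) : Subgroup G :=
  MonoidHom.ker (Representation.asGroupHom V.ρ)

/-- The codegree of a character: `|G : ker χ| / χ(1)`. -/
noncomputable def codeg {G : Type} [Group G] (V : FDRep ℂ G) : ℕ :=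
  (charKer V).index / Module.finrank ℂ V

/-- The set of codegrees of irreducible characters of `G`. -/
def codSet (G : Type) [Group G] : Set ℕ :=
  {n | ∃ V : FDRep ℂ G, Simple V ∧ codeg V = n}

/-- Inner product of class functions on a finite group. -/
noncomputable def innerChar (G : Type) [Group G] (f g : G → ℂ) : ℂ :=
  (∑ᶠ x : G, f x * starRingEnd ℂ (g x)) / Nat.card G

open scoped Classical in
/-- The induced character `θ^G` of a character `θ` of a subgroup `H ≤ G`. -/
noncomputable def indChar {G : Type} [Group G] (H : Subgroup G) (θ : FDRep ℂ ↥H) : G → ℂ :=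
  fun g => (∑ᶠ x : G, if h : x * g * x⁻¹ ∈ H then θ.character ⟨x * g * x⁻¹, h⟩ else 0) /
    Nat.card ↥H


theorem simple_irr {G : Type} [Group G] (χ : FDRep ℂ G) (hχ : Simple χ) (W : Submodule ℂ χ)
    (hW : ∀ g : G, ∀ v ∈ W, χ.ρ g v ∈ W) : W = ⊥ ∨ W = ⊤ := by
  let S : Subrepresentation χ.ρ := ⟨W, fun g v hv => hW g v hv⟩
  let Y : FDRep ℂ G := FDRep.of S.toRepresentation
  let f : Y ⟶ χ := ⟨FGModuleCat.ofHom W.subtype, fun g => by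
    ext v; rfl⟩
  have hf : Mono f := by
    have : Mono ((forget _).map f) := by
      rw [mono_iff_injective]
      exact Subtype.val_injective
    exact (forget _).mono_of_mono_map this
  by_cases h0 : f = 0
  · left
    rw [eq_bot_iff]
    intro v hv
    have : f.hom.hom.hom ⟨v, hv⟩ = 0 := by rw [h0]; rfl
    exact this
  · right
    have : IsIso f := isIso_of_mono_of_nonzero h0
    rw [eq_top_iff]
    intro v _
    have h : v = f.hom.hom.hom ((inv f).hom.hom.hom v) := by
      have h2 := IsIso.inv_hom_id f
      have h3 : ((inv f) ≫ f).hom.hom.hom v = v := by rw [h2]; rfl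
      exact h3.symm
    rw [h]
    exact (Subtype.prop ((inv f).hom.hom.hom v : W))

theorem simple_nontrivial {G : Type} [Group G] (χ : FDRep ℂ G) (hχ : Simple χ) : Nontrivial χ := by
  by_contra h
  rw [not_nontrivial_iff_subsingleton] at h
  apply id_nonzero χ
  ext v
  exact Subsingleton.elim (α := χ) _ _

theorem irr_simple {G : Type} [Group G] [Finite G] {V : Type} [AddCommGroup V] [Module ℂ V]
    [FiniteDimensional ℂ V] (ρ : Representation ℂ G V) (h : ρ.IsIrreducible) :
    Simple (FDRep.of ρ) := by
  have := Fintype.ofFinite G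
  have hne : (Nat.card G : ℂ) ≠ 0 := by exact_mod_cast Nat.card_pos.ne'
  have := invertibleOfNonzero hne
  rw [FDRep.simple_iff_char_is_norm_one]
  have := Representation.char_orthonormal ρ ρ
  rw [if_pos ⟨Representation.Equiv.refl ρ⟩, inv_mul_eq_iff_eq_mul₀ hne] at this
  rw [mul_one] at this
  exact this

theorem isIntegral_char {G : Type} [Group G] [Finite G] {V : Type} [AddCommGroup V] [Module ℂ V]
    [FiniteDimensional ℂ V] (ρ : Representation ℂ G V) (g : G) : IsIntegral ℤ (ρ.character g) := by
  unfold Representation.character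
  rw [Module.End.trace_eq_sum_roots_charpoly_of_splits (IsAlgClosed.splits _)]
  apply IsIntegral.multiset_sum
  intro a ha
  have hr : (ρ g).charpoly.IsRoot a := (Polynomial.mem_roots'.1 ha).2
  rw [← Module.End.hasEigenvalue_iff_isRoot_charpoly] at hr
  obtain ⟨v, hv⟩ := hr.exists_hasEigenvector
  have h1 := hv.pow_apply (orderOf g)
  rw [← map_pow, pow_orderOf_eq_one, map_one, Module.End.one_apply] at h1
  have h2 : a ^ orderOf g = 1 := by
    have : (a ^ orderOf g - 1) • v = 0 := by rw [sub_smul, one_smul, ← h1, sub_self]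
    rcases smul_eq_zero.1 this with h | h
    · exact sub_eq_zero.1 h
    · exact absurd h hv.2
  refine IsIntegral.of_pow (orderOf_pos g) ?_
  rw [h2]; exact isIntegral_one

theorem degree_dvd {G : Type} [Group G] [Finite G] {V : Type} [AddCommGroup V] [Module ℂ V]
    [FiniteDimensional ℂ V] (ρ : Representation ℂ G V) (h : ρ.IsIrreducible) :
    Module.finrank ℂ V ∣ Nat.card G := by
  have := Fintype.ofFinite G
  have hne : (Nat.card G : ℂ) ≠ 0 := by exact_mod_cast Nat.card_pos.ne'
  have := invertibleOfNonzero hne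
  have horth := Representation.char_orthonormal ρ ρ
  rw [if_pos ⟨Representation.Equiv.refl ρ⟩, inv_mul_eq_iff_eq_mul₀ hne, mul_one] at horth
  have hVn : Nontrivial V := by
    by_contra hV
    rw [not_nontrivial_iff_subsingleton] at hV
    have h1 : (⊥ : Subrepresentation ρ) ≠ ⊤ := bot_ne_top
    apply h1
    apply Subrepresentation.toSubmodule_injective
    exact Subsingleton.elim _ _
  -- the central element acts as an endomorphism
  let T : V →ₗ[ℂ] V := ∑ g : G, ρ.character g⁻¹ • ρ g
  have hT : ∀ x : G, T ∘ₗ ρ x = ρ x ∘ₗ T := by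
    intro x
    change T * ρ x = ρ x * T
    simp only [T, Finset.sum_mul, Finset.mul_sum, smul_mul_assoc, mul_smul_comm, ← map_mul]
    refine Fintype.sum_equiv (MulAut.conj x⁻¹).toEquiv _ _ ?_
    intro g
    simp only [MulEquiv.toEquiv_eq_coe, EquivLike.coe_coe, MulAut.conj_apply]
    congr 1
    · have := ρ.char_conj g⁻¹ x⁻¹
      rw [← this]; congr 1; group
    · congr 1; group
  let Ti : Representation.IntertwiningMap ρ ρ := ⟨T, fun x => hT x⟩
  obtain ⟨c, hc⟩ := (Representation.IsIrreducible.algebraMap_intertwiningMap_bijective_of_isAlgClosed (ρ := ρ)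
    ).2 Ti
  have hTc : T = c • LinearMap.id := by
    have := congrArg Representation.IntertwiningMap.toLinearMap hc
    rw [show T = Ti.toLinearMap from rfl, ← this]
    ext v; rfl
  have htr : (Nat.card G : ℂ) = c * Module.finrank ℂ V := by
    have h1 : LinearMap.trace ℂ V T = ∑ g : G, ρ.character g * ρ.character g⁻¹ := by
      simp only [T, map_sum, map_smul, smul_eq_mul]
      exact Finset.sum_congr rfl fun g _ => mul_comm _ _
    rw [horth, hTc, map_smul, LinearMap.trace_id, smul_eq_mul] at h1
    exact h1.symm
  -- integrality
  let R := integralClosure ℤ ℂ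
  have hTint : IsIntegral R T := by
    let φ : MonoidAlgebra R G →ₐ[R] (V →ₗ[ℂ] V) := MonoidAlgebra.lift R (V →ₗ[ℂ] V) G ρ
    let z : MonoidAlgebra R G := ∑ g : G, MonoidAlgebra.single g ⟨ρ.character g⁻¹, isIntegral_char ρ _⟩
    have hz : φ z = T := by
      simp only [φ, z, T, map_sum, MonoidAlgebra.lift_single]
      rfl
    rw [← hz]
    have : Module.Finite R (MonoidAlgebra R G) := inferInstance
    exact (IsIntegral.of_finite R z).map φ
  have hcint : IsIntegral R c := by
    rw [hTc] at hTint
    have : c • LinearMap.id = algebraMap ℂ (V →ₗ[ℂ] V) c := by ext; simp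
    rw [this] at hTint
    exact (isIntegral_algebraMap_iff (FaithfulSMul.algebraMap_injective ℂ _)).1 hTint
  have hcZ : IsIntegral ℤ c := isIntegral_trans (A := R) c hcint
  have hd : (Module.finrank ℂ V : ℂ) ≠ 0 := by exact_mod_cast Module.finrank_pos.ne'
  have hcq : c = algebraMap ℚ ℂ ((Nat.card G : ℚ) / Module.finrank ℂ V) := by
    simp only [map_div₀, map_natCast]
    field_simp
    rw [htr]
  rw [hcq, isIntegral_algebraMap_iff (algebraMap ℚ ℂ).injective, IsIntegrallyClosed.isIntegral_iff] at hcZ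
  obtain ⟨m, hm⟩ := hcZ
  have hd' : (Module.finrank ℂ V : ℚ) ≠ 0 := by exact_mod_cast hd
  rw [eq_div_iff hd'] at hm
  have : (m * (Module.finrank ℂ V : ℤ) : ℤ) = Nat.card G := by
    have h5 : ((m * (Module.finrank ℂ V : ℤ) : ℤ) : ℚ) = ((Nat.card G : ℤ) : ℚ) := by
      push_cast; simpa using hm
    exact_mod_cast h5
  exact Int.natCast_dvd_natCast.1 ⟨m, by rw [← this, mul_comm]⟩

theorem degree_dvd_index {G : Type} [Group G] [Finite G] {V : Type} [AddCommGroup V] [Module ℂ V]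
    [FiniteDimensional ℂ V] (ρ : Representation ℂ G V) (h : ρ.IsIrreducible) (L : Subgroup G)
    [L.Normal] (hL : ∀ l ∈ L, ρ l = 1) :
    Module.finrank ℂ V ∣ L.index := by
  let σ : Representation ℂ (G ⧸ L) V := QuotientGroup.lift L ρ hL
  have hσ : σ.IsIrreducible := by
    let e : Subrepresentation σ ≃o Subrepresentation ρ :=
    { toFun := fun S => ⟨S.toSubmodule, fun g v hv => S.apply_mem_toSubmodule (g : G ⧸ L) hv⟩
      invFun := fun S => ⟨S.toSubmodule, fun g v hv => by
        induction g using QuotientGroup.induction_on with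
        | H g => exact S.apply_mem_toSubmodule g hv⟩
      left_inv := fun S => rfl
      right_inv := fun S => rfl
      map_rel_iff' := Iff.rfl }
    exact e.isSimpleOrder_iff.2 h
  exact degree_dvd σ hσ

theorem mem_charKer {G : Type} [Group G] (V : FDRep ℂ G) (g : G) :
    g ∈ charKer V ↔ ∀ v : V, V.ρ g v = v := by
  unfold charKer
  rw [MonoidHom.mem_ker, Units.ext_iff, Representation.asGroupHom_apply, Units.val_one]
  exact LinearMap.ext_iff

instance charKer_normal {G : Type} [Group G] (V : FDRep ℂ G) : (charKer V).Normal := by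
  unfold charKer; infer_instance

/-- The twisted permutation representation on functions `G ⧸ H → V`. -/
noncomputable def permRep {G : Type} [Group G] {V : Type} [AddCommGroup V] [Module ℂ V]
    (ρ : Representation ℂ G V) (H : Subgroup G) : Representation ℂ G (G ⧸ H → V) where
  toFun g :=
    { toFun := fun f x => ρ g (f (g⁻¹ • x))
      map_add' := fun f f' => by ext x; simp
      map_smul' := fun c f => by ext x; simp }
  map_one' := by ext; simp
  map_mul' g g' := by
    refine LinearMap.ext fun f => funext fun x => ?_
    simp [mul_smul]

theorem exists_min_subrep {G : Type} [Group G] {U : Type} [AddCommGroup U] [Module ℂ U]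
    [FiniteDimensional ℂ U] (ρ : Representation ℂ G U) (A : Submodule ℂ U)
    (hA : ∀ g : G, ∀ v ∈ A, ρ g v ∈ A) (hne : A ≠ ⊥) :
    ∃ S : Subrepresentation ρ, S.toSubmodule ≤ A ∧ S.toSubmodule ≠ ⊥ ∧
      S.toRepresentation.IsIrreducible := by
  let P : Set (Submodule ℂ U) := {B | B ≤ A ∧ B ≠ ⊥ ∧ ∀ g : G, ∀ v ∈ B, ρ g v ∈ B}
  obtain ⟨B, ⟨hBA, hB0, hB⟩, hmin⟩ := WellFounded.has_min
    (wellFounded_lt : WellFounded (fun a b : Submodule ℂ U => a < b)) P ⟨A, le_refl _, hne, hA⟩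
  refine ⟨⟨B, fun g v hv => hB g v hv⟩, hBA, hB0, ?_⟩
  set S : Subrepresentation ρ := ⟨B, fun g v hv => hB g v hv⟩ with hS
  have : Nontrivial (Subrepresentation S.toRepresentation) := by
    refine ⟨⊥, ⊤, fun h => hB0 ?_⟩
    rw [eq_bot_iff]
    intro v hv
    have h1 : (⟨v, hv⟩ : S.toSubmodule) ∈ (⊤ : Subrepresentation S.toRepresentation) := trivial
    rw [← h] at h1
    have h2 : (⟨v, hv⟩ : S.toSubmodule) = 0 := h1
    exact congrArg Subtype.val h2
  refine ⟨fun X => ?_⟩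
  by_cases hX : X.toSubmodule = ⊥
  · left
    exact Subrepresentation.toSubmodule_injective hX
  · right
    apply Subrepresentation.toSubmodule_injective
    change X.toSubmodule = ⊤
    let C : Submodule ℂ U := X.toSubmodule.map B.subtype
    have hCB : C ≤ B := Submodule.map_subtype_le _ _
    have hC : C ∈ P := by
      refine ⟨hCB.trans hBA, ?_, ?_⟩
      · intro h
        apply hX
        exact Submodule.map_injective_of_injective B.injective_subtype (h.trans (Submodule.map_bot _).symm)
      · rintro g _ ⟨w, hw, rfl⟩
        exact ⟨S.toRepresentation g w, X.apply_mem_toSubmodule g hw, rfl⟩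
    have hCe : C = B := by
      by_contra hCB'
      exact hmin C hC (lt_of_le_of_ne hCB hCB')
    rw [eq_top_iff]
    rintro ⟨v, hv⟩ _
    have : v ∈ C := by rw [hCe]; exact hv
    obtain ⟨w, hw, hwv⟩ := this
    have : w = ⟨v, hv⟩ := Subtype.ext hwv
    rw [← this]; exact hw

theorem lemmaA {G : Type} [Group G] [Finite G] (χ : FDRep ℂ G) (hχ : Simple χ)
    (hmaxcod : ∀ ψ : FDRep ℂ G, Simple ψ → codeg ψ ≤ codeg χ)
    (N : Subgroup G) (hNK : N ≤ charKer χ) (H : Subgroup G) (hH : H ≠ ⊤)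
    (hNH : ∀ g : G, ∃ n ∈ N, ∃ h ∈ H, g = n * h) :
    ∃ L : Subgroup G, L.Normal ∧ ¬ N ≤ L ∧ ¬ L ≤ H ∧
      ∀ R : Subgroup G, R.Normal → R ≤ H → R ≤ charKer χ → R ≤ L := by
  have hnt : Nontrivial χ := simple_nontrivial χ hχ
  have : Fintype (G ⧸ H) := Fintype.ofFinite _
  classical
  let V : Type := χ
  let π : Representation ℂ G (G ⧸ H → χ) := permRep χ.ρ H
  have hπ : ∀ g f x, π g f x = χ.ρ g (f (g⁻¹ • x)) := fun g f x => rfl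
  let s : (G ⧸ H → χ) →ₗ[ℂ] χ :=
    { toFun := fun f => ∑ x, f x
      map_add' := fun f f' => by simp [Finset.sum_add_distrib]
      map_smul' := fun c f => by simp [Finset.smul_sum] }
  have hs : ∀ f, s f = ∑ x, f x := fun f => rfl
  let A : Submodule ℂ (G ⧸ H → χ) := LinearMap.ker s
  have hA : ∀ g : G, ∀ v ∈ A, π g v ∈ A := by
    intro g f hf
    have hf' : ∑ x, f x = 0 := hf
    change ∑ x, χ.ρ g (f (g⁻¹ • x)) = 0
    rw [← map_sum]
    have : ∑ x : G ⧸ H, f (g⁻¹ • x) = ∑ x, f x :=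
      Fintype.sum_equiv (MulAction.toPerm g⁻¹) _ _ (fun x => rfl)
    rw [this, hf', map_zero]
  have hcard : Fintype.card (G ⧸ H) = H.index := by
    rw [← Nat.card_eq_fintype_card]; rfl
  have hindex : 1 < H.index := by
    have h1 : H.index ≠ 1 := fun h => hH (Subgroup.index_eq_one.1 h)
    have h2 : H.index ≠ 0 := Subgroup.index_ne_zero_of_finite
    omega
  have hssurj : Function.Surjective s := by
    intro v
    refine ⟨Pi.single ((1 : G) : G ⧸ H) v, ?_⟩
    rw [hs]
    simp
  have hdimA : Module.finrank ℂ A = (H.index - 1) * Module.finrank ℂ χ := by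
    have h1 := LinearMap.finrank_range_add_finrank_ker s
    rw [LinearMap.range_eq_top.2 hssurj, finrank_top, Module.finrank_pi_fintype] at h1
    simp only [Finset.sum_const, Finset.card_univ, hcard, smul_eq_mul] at h1
    rw [Nat.sub_mul, one_mul]
    change Module.finrank ℂ χ + Module.finrank ℂ A = _ at h1
    omega
  have hVpos : 0 < Module.finrank ℂ χ := Module.finrank_pos
  have hAne : A ≠ ⊥ := by
    intro h
    have : Module.finrank ℂ A = 0 := by rw [h]; exact finrank_bot _ _
    rw [hdimA] at this
    have : 0 < (H.index - 1) * Module.finrank ℂ χ := Nat.mul_pos (by omega) hVpos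
    omega
  obtain ⟨S, hSA, hS0, hSirr⟩ := exists_min_subrep π A hA hAne
  let ψ : FDRep ℂ G := FDRep.of S.toRepresentation
  have hψ : Simple ψ := irr_simple _ hSirr
  have hLmem : ∀ g : G, g ∈ charKer ψ ↔ ∀ f ∈ S.toSubmodule, π g f = f := by
    intro g
    rw [mem_charKer]
    constructor
    · intro h f hf
      exact congrArg Subtype.val (h ⟨f, hf⟩)
    · rintro h ⟨f, hf⟩
      exact Subtype.ext (h f hf)
  obtain ⟨f, hfS, hf0⟩ := (Submodule.ne_bot_iff _).1 hS0
  have htriv : ∀ R : Subgroup G, R.Normal → R ≤ H → ∀ r ∈ R, ∀ x : G ⧸ H, r⁻¹ • x = x := by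
    intro R hR hRH r hr x
    induction x using QuotientGroup.induction_on with
    | H x =>
      change ((r⁻¹ * x : G) : G ⧸ H) = x
      rw [QuotientGroup.eq]
      apply hRH
      have := hR.conj_mem r hr x⁻¹
      simpa [mul_assoc] using this
  refine ⟨charKer ψ, charKer_normal ψ, ?_, ?_, ?_⟩
  · intro hN
    apply hf0
    have hconst : ∀ x : G ⧸ H, f x = f ((1 : G) : G ⧸ H) := by
      intro x
      induction x using QuotientGroup.induction_on with
      | H x =>
        obtain ⟨n, hn, h, hh, rfl⟩ := hNH x
        have h1 := (hLmem n).1 (hN hn) f hfS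
        have h2 := congrFun h1 ((n * h : G) : G ⧸ H)
        rw [hπ, (mem_charKer χ n).1 (hNK hn)] at h2
        rw [← h2]
        congr 1
        change ((n⁻¹ * (n * h) : G) : G ⧸ H) = _
        rw [QuotientGroup.eq]
        simpa using H.inv_mem hh
    have hsum : ∑ x, f x = 0 := hSA hfS
    rw [Finset.sum_congr rfl (fun x _ => hconst x), Finset.sum_const, Finset.card_univ, hcard,
      ← Nat.cast_smul_eq_nsmul ℂ] at hsum
    rcases smul_eq_zero.1 hsum with h | h
    · exfalso
      have : H.index = 0 := by exact_mod_cast h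
      omega
    · funext x
      rw [hconst x, h]; rfl
  · intro hLH
    have hLK : charKer ψ ≤ charKer χ := by
      let E : Submodule ℂ χ :=
        { carrier := {v | ∀ l ∈ charKer ψ, χ.ρ l v = v}
          add_mem' := fun {a b} ha hb l hl => by rw [map_add, ha l hl, hb l hl]
          zero_mem' := fun l _ => map_zero _
          smul_mem' := fun c v hv l hl => by rw [map_smul, hv l hl] }
      have hEinv : ∀ g : G, ∀ v ∈ E, χ.ρ g v ∈ E := by
        intro g v hv l hl
        have h1 : g⁻¹ * l * g ∈ charKer ψ := by
          have := (charKer_normal ψ).conj_mem l hl g⁻¹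
          simpa using this
        have h2 := hv _ h1
        have h3 : χ.ρ l (χ.ρ g v) = χ.ρ g (χ.ρ (g⁻¹ * l * g) v) := by
          rw [← Module.End.mul_apply, ← Module.End.mul_apply, ← map_mul, ← map_mul]
          congr 2; group
        rw [h3, h2]
      rcases simple_irr χ hχ E hEinv with h | h
      · exfalso
        apply hf0
        funext x
        have : f x ∈ E := by
          intro l hl
          have h1 := congrFun ((hLmem l).1 hl f hfS) x
          rw [hπ, htriv _ (charKer_normal ψ) hLH l hl] at h1
          exact h1
        rw [h] at this
        exact this
      · intro l hl
        rw [mem_charKer]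
        intro v
        have : v ∈ E := by rw [h]; trivial
        exact this l hl
    have hdvd : Module.finrank ℂ ψ ∣ (charKer ψ).index :=
      degree_dvd_index S.toRepresentation hSirr (charKer ψ)
        (fun l hl => LinearMap.ext ((mem_charKer ψ l).1 hl))
    have hle : Module.finrank ℂ ψ ≤ (H.index - 1) * Module.finrank ℂ χ := by
      rw [← hdimA]; exact Submodule.finrank_mono hSA
    have hc := hmaxcod ψ hψ
    have h1 : (charKer ψ).index = Module.finrank ℂ ψ * codeg ψ := (Nat.mul_div_cancel' hdvd).symm
    have h2 : Module.finrank ℂ χ * codeg χ ≤ (charKer χ).index := Nat.mul_div_le _ _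
    have h3 : (charKer χ).index * H.index ≤ (charKer ψ).index := by
      have h4 : charKer ψ ≤ H ⊓ charKer χ := le_inf hLH hLK
      have h5 : (H ⊓ charKer χ).index ≤ (charKer ψ).index :=
        Nat.le_of_dvd (Nat.pos_of_ne_zero Subgroup.index_ne_zero_of_finite) (Subgroup.index_dvd_of_le h4)
      refine le_trans (le_of_eq ?_) h5
      rw [← Subgroup.relIndex_mul_index (inf_le_left : H ⊓ charKer χ ≤ H),
        Subgroup.inf_relIndex_left]
      congr 1
      have hsup : H ⊔ charKer χ = ⊤ := by
        rw [eq_top_iff]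
        intro g _
        obtain ⟨n, hn, h, hh, rfl⟩ := hNH g
        exact Subgroup.mul_mem _ (Subgroup.mem_sup_right (hNK hn)) (Subgroup.mem_sup_left hh)
      rw [← Subgroup.relIndex_sup_right H (charKer χ), hsup, Subgroup.relIndex_top_right]
    have hKpos : 0 < (charKer χ).index := Nat.pos_of_ne_zero Subgroup.index_ne_zero_of_finite
    have h6 : (charKer ψ).index ≤ (H.index - 1) * (charKer χ).index := by
      calc (charKer ψ).index = Module.finrank ℂ ψ * codeg ψ := h1
        _ ≤ ((H.index - 1) * Module.finrank ℂ χ) * codeg χ := Nat.mul_le_mul hle hc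
        _ = (H.index - 1) * (Module.finrank ℂ χ * codeg χ) := by ring
        _ ≤ _ := Nat.mul_le_mul_left _ h2
    have h7 : (H.index - 1) * (charKer χ).index < (charKer χ).index * H.index := by
      rw [mul_comm]
      exact Nat.mul_lt_mul_of_pos_left (by omega) hKpos
    omega
  · intro R hR hRH hRK r hr
    rw [hLmem]
    intro f _
    funext x
    rw [hπ, htriv R hR hRH r hr, (mem_charKer χ r).1 (hRK hr)]

open scoped commutatorElement

/-- The group theoretic consequence of maximality of the codegree that is used. -/
def CompProp (G : Type) [Group G] (K : Subgroup G) : Prop :=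
  ∀ N H : Subgroup G, N.Normal → N ≤ K → H ≠ ⊤ → (∀ g : G, ∃ n ∈ N, ∃ h ∈ H, g = n * h) →
    ∃ L : Subgroup G, L.Normal ∧ ¬ N ≤ L ∧ ¬ L ≤ H ∧
      ∀ R : Subgroup G, R.Normal → R ≤ H → R ≤ K → R ≤ L

theorem le_comap_mk {G : Type} [Group G] (X : Subgroup G) [X.Normal] (Y : Subgroup (G ⧸ X)) :
    X ≤ Y.comap (QuotientGroup.mk' X) := by
  intro x hx
  rw [Subgroup.mem_comap, QuotientGroup.mk'_apply, (QuotientGroup.eq_one_iff x).2 hx]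
  exact Y.one_mem

theorem comap_map_of_le {G : Type} [Group G] (X : Subgroup G) [X.Normal] (Y : Subgroup G)
    (h : X ≤ Y) : (Y.map (QuotientGroup.mk' X)).comap (QuotientGroup.mk' X) = Y := by
  rw [Subgroup.comap_map_eq, QuotientGroup.ker_mk', sup_eq_left.2 h]

theorem map_comap_mk {G : Type} [Group G] (X : Subgroup G) [X.Normal] (Y : Subgroup (G ⧸ X)) :
    (Y.comap (QuotientGroup.mk' X)).map (QuotientGroup.mk' X) = Y :=
  Subgroup.map_comap_eq_self_of_surjective (QuotientGroup.mk'_surjective X) Y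

theorem CompProp.quotient {G : Type} [Group G] {K : Subgroup G} (hP : CompProp G K)
    (X : Subgroup G) [X.Normal] (hX : X ≤ K) :
    CompProp (G ⧸ X) (K.map (QuotientGroup.mk' X)) := by
  intro N H hN hNK hH hNH
  have hcK := comap_map_of_le X K hX
  obtain ⟨L, hL, h1, h2, h3⟩ := hP (N.comap (QuotientGroup.mk' X)) (H.comap (QuotientGroup.mk' X))
    (hN.comap _) (by rw [← hcK]; exact Subgroup.comap_mono hNK)
    (by
      intro h
      apply hH
      rw [← map_comap_mk X H, h, ← MonoidHom.range_eq_map]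
      exact QuotientGroup.range_mk' X)
    (by
      intro g
      obtain ⟨n, hn, h, hh, hg⟩ := hNH (g : G ⧸ X)
      obtain ⟨n', rfl⟩ := QuotientGroup.mk'_surjective X n
      refine ⟨n', hn, n'⁻¹ * g, ?_, by group⟩
      rw [Subgroup.mem_comap]
      have : QuotientGroup.mk' X (n'⁻¹ * g) = h := by
        rw [map_mul, map_inv, inv_mul_eq_iff_eq_mul]; exact hg
      rw [this]; exact hh)
  have hXL : X ≤ L := h3 X inferInstance (le_comap_mk X H) hX
  have hcL := comap_map_of_le X L hXL
  refine ⟨L.map (QuotientGroup.mk' X), hL.map _ (QuotientGroup.mk'_surjective X), ?_, ?_, ?_⟩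
  · intro h
    apply h1
    rw [← hcL]
    exact Subgroup.comap_mono h
  · intro h
    apply h2
    exact Subgroup.map_le_iff_le_comap.1 h
  · intro R hR hRH hRK
    rw [← map_comap_mk X R]
    apply Subgroup.map_mono
    refine h3 _ (hR.comap _) (Subgroup.comap_mono hRH) ?_
    rw [← hcK]; exact Subgroup.comap_mono hRK

theorem nilpotent_of_frattini {G : Type} [Group G] [Finite G] (N B : Subgroup G) [N.Normal]
    [B.Normal] (hNB : N ≤ B) (hN : N ≤ frattini G)
    (h : Group.IsNilpotent (B.map (QuotientGroup.mk' N))) : Group.IsNilpotent B := by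
  have q := (Group.isNilpotent_of_finite_tfae (G := B)).out 0 3
  rw [q]; clear q
  intro p hp P
  let f := (QuotientGroup.mk' N).subgroupMap B
  have hf : Function.Surjective f := MonoidHom.subgroupMap_surjective _ _
  let P1 : Sylow p (B.map (QuotientGroup.mk' N)) := P.mapSurjective hf
  have hBn : (B.map (QuotientGroup.mk' N)).Normal :=
    Subgroup.Normal.map inferInstance _ (QuotientGroup.mk'_surjective N)
  have hchar : (P1 : Subgroup (B.map (QuotientGroup.mk' N))).Characteristic :=
    P1.characteristic_of_normal inferInstance
  let M0 : Subgroup (G ⧸ N) :=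
    (P1 : Subgroup (B.map (QuotientGroup.mk' N))).map (B.map (QuotientGroup.mk' N)).subtype
  have hM0n : M0.Normal := ConjAct.normal_of_characteristic_of_normal
  let P' : Subgroup G := (P : Subgroup B).map B.subtype
  have hM0 : M0 = P'.map (QuotientGroup.mk' N) := by
    change ((P : Subgroup B).map f).map _ = ((P : Subgroup B).map B.subtype).map _
    rw [Subgroup.map_map, Subgroup.map_map]
    rfl
  let M : Subgroup G := M0.comap (QuotientGroup.mk' N)
  have hM : M = P' ⊔ N := by
    change M0.comap _ = _
    rw [hM0, Subgroup.comap_map_eq, QuotientGroup.ker_mk']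
  have hMn : M.Normal := hM0n.comap _
  have hP'M : P' ≤ M := by rw [hM]; exact le_sup_left
  have hP'B : P' ≤ B := Subgroup.map_subtype_le _
  have hMB : M ≤ B := by rw [hM]; exact sup_le hP'B hNB
  have hp' : IsPGroup p P' := P.isPGroup'.map _
  have hidx : ¬ p ∣ (P'.subgroupOf M).index := by
    intro hd
    apply P.not_dvd_index
    have h1 : P'.relIndex M ∣ P'.relIndex B := by
      rw [← Subgroup.relIndex_mul_relIndex P' M B hP'M hMB]
      exact dvd_mul_right _ _
    have h2 : P'.relIndex B = (P : Subgroup B).index := by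
      rw [Subgroup.relIndex]
      congr 1
      exact Subgroup.comap_map_eq_self_of_injective B.subtype_injective _
    rw [h2] at h1
    exact hd.trans h1
  let Q : Sylow p M := IsPGroup.toSylow (P := P'.subgroupOf M)
    (hp'.comap_of_injective M.subtype M.subtype_injective) hidx
  have hfr := Sylow.normalizer_sup_eq_top Q
  have hQ : (Q : Subgroup M).map M.subtype = P' := by
    change (P'.subgroupOf M).map M.subtype = P'
    exact Subgroup.map_subgroupOf_eq_of_le hP'M
  rw [hQ] at hfr
  have hnorm : Subgroup.normalizer (P' : Set G) = ⊤ := by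
    apply frattini_nongenerating
    rw [eq_top_iff, ← hfr]
    refine sup_le le_sup_left ?_
    rw [hM]
    exact sup_le (Subgroup.le_normalizer.trans le_sup_left) (hN.trans le_sup_right)
  have : P'.Normal := Subgroup.normalizer_eq_top_iff.mp hnorm
  exact this.of_map_subtype

theorem nilpotent_of_two {G : Type} [Group G] (N X B : Subgroup G) [N.Normal] [X.Normal]
    (hNX : N ⊓ X = ⊥) (h1 : Group.IsNilpotent (B.map (QuotientGroup.mk' N)))
    (h2 : Group.IsNilpotent (B.map (QuotientGroup.mk' X))) : Group.IsNilpotent B := by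
  let f := ((QuotientGroup.mk' N).subgroupMap B).prod ((QuotientGroup.mk' X).subgroupMap B)
  refine Subgroup.isNilpotent_of_ker_le_center f ?_
  intro b hb
  have hb' : f b = 1 := hb
  have e1 : QuotientGroup.mk' N (b : G) = 1 := congrArg Subtype.val (congrArg Prod.fst hb')
  have e2 : QuotientGroup.mk' X (b : G) = 1 := congrArg Subtype.val (congrArg Prod.snd hb')
  have : (b : G) ∈ N ⊓ X := ⟨(QuotientGroup.eq_one_iff _).1 e1, (QuotientGroup.eq_one_iff _).1 e2⟩
  rw [hNX, Subgroup.mem_bot] at this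
  have : b = 1 := Subtype.ext this
  rw [this]; exact Subgroup.one_mem _

theorem nilpotent_of_central {G : Type} [Group G] (N B : Subgroup G) [N.Normal]
    (hc : ∀ n ∈ N, ∀ b ∈ B, b * n = n * b)
    (h1 : Group.IsNilpotent (B.map (QuotientGroup.mk' N))) : Group.IsNilpotent B := by
  refine Subgroup.isNilpotent_of_ker_le_center ((QuotientGroup.mk' N).subgroupMap B) ?_
  intro b hb
  have e1 : QuotientGroup.mk' N (b : G) = 1 := congrArg Subtype.val (show _ = 1 from hb)
  have hbN : (b : G) ∈ N := (QuotientGroup.eq_one_iff _).1 e1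
  rw [Subgroup.mem_center_iff]
  intro c
  exact Subtype.ext (hc b hbN c c.2)

theorem mainT (n : ℕ) : ∀ (G : Type) [Group G] [Finite G], Nat.card G = n → Group.IsSolvable G →
    ∀ K B : Subgroup G, K.Normal → B.Normal → K ≤ B → ⁅B, B⁆ ≤ K →
    (∀ X : Subgroup G, X.Normal → K ≤ X → X ≤ B → X = K ∨ X = B) → CompProp G K →
    Group.IsNilpotent B := by
  induction n using Nat.strong_induction_on with
  | _ n ih =>
  intro G _ _ hcard hsol K B hK hB hKB hBB hchief hP
  -- the quotient step
  have hquot : ∀ X : Subgroup G, ∀ _ : X.Normal, X ≤ K → X ≠ ⊥ →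
      Group.IsNilpotent (B.map (QuotientGroup.mk' X)) := by
    intro X hXn hXK hX0
    have hlt : Nat.card (G ⧸ X) < n := by
      rw [← hcard, X.card_eq_card_quotient_mul_card_subgroup]
      have h1 : 1 < Nat.card X := (Subgroup.one_lt_card_iff_ne_bot X).2 hX0
      have h2 : 0 < Nat.card (G ⧸ X) := Nat.card_pos
      nlinarith
    refine ih _ hlt (G ⧸ X) rfl inferInstance (K.map (QuotientGroup.mk' X)) _
      (hK.map _ (QuotientGroup.mk'_surjective X)) (hB.map _ (QuotientGroup.mk'_surjective X))
      (Subgroup.map_mono hKB) ?_ ?_ (hP.quotient X hXK)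
    · rw [← Subgroup.map_commutator]
      exact Subgroup.map_mono hBB
    · intro Y hY h1 h2
      have := hchief (Y.comap (QuotientGroup.mk' X)) (hY.comap _)
        (Subgroup.map_le_iff_le_comap.1 h1)
        (by rw [← comap_map_of_le X B (hXK.trans hKB)]; exact Subgroup.comap_mono h2)
      rw [← map_comap_mk X Y]
      rcases this with h | h
      · left; rw [h]
      · right; rw [h]
  by_cases hK0 : K = ⊥
  · rw [hK0, le_bot_iff] at hBB
    have hcomm : ∀ a b : B, a * b = b * a := by
      intro a b
      have : ⁅(a : G), (b : G)⁆ ∈ ⁅B, B⁆ := Subgroup.commutator_mem_commutator a.2 b.2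
      rw [hBB, Subgroup.mem_bot, commutatorElement_eq_one_iff_mul_comm] at this
      exact Subtype.ext this
    let _ : CommGroup B := { (inferInstance : Group B) with mul_comm := hcomm }
    exact CommGroup.isNilpotent
  -- a minimal normal subgroup
  obtain ⟨N, ⟨hNn, hN0, hNK⟩, hNmin⟩ := WellFounded.has_min
    (wellFounded_lt : WellFounded (fun a b : Subgroup G => a < b))
    {X : Subgroup G | X.Normal ∧ X ≠ ⊥ ∧ X ≤ K} ⟨K, hK, hK0, le_refl _⟩
  have hmin : ∀ X : Subgroup G, X.Normal → X ≤ N → X = ⊥ ∨ X = N := by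
    intro X hX hXN
    by_contra h
    push Not at h
    exact hNmin X ⟨hX, h.1, hXN.trans hNK⟩ (lt_of_le_of_ne hXN h.2)
  have hBN := hquot N hNn hNK hN0
  by_cases hX : ∃ X : Subgroup G, X.Normal ∧ X ≠ ⊥ ∧ X ≤ K ∧ ¬ N ≤ X
  · obtain ⟨X, hXn, hX0, hXK, hNX⟩ := hX
    refine nilpotent_of_two N X B ?_ hBN (hquot X hXn hXK hX0)
    rcases hmin (N ⊓ X) inferInstance inf_le_left with h | h
    · exact h
    · exact absurd (inf_eq_left.1 h) hNX
  by_cases hfr : N ≤ frattini G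
  · exact nilpotent_of_frattini N B (hNK.trans hKB) hfr hBN
  have hH : ∃ H : Subgroup G, IsCoatom H ∧ ¬ N ≤ H := by
    by_contra hcon
    push Not at hcon
    apply hfr
    exact le_iInf₂ hcon
  obtain ⟨H, hHmax, hNH⟩ := hH
  have hsup : N ⊔ H = ⊤ := by
    apply hHmax.2
    refine lt_of_le_of_ne le_sup_right ?_
    intro h
    exact hNH (by rw [h]; exact le_sup_left)
  have hdec : ∀ g : G, ∃ n ∈ N, ∃ h ∈ H, g = n * h := by
    intro g
    have : g ∈ N ⊔ H := by rw [hsup]; trivial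
    obtain ⟨y, hy, z, hz, rfl⟩ := Subgroup.mem_sup_of_normal_left.1 this
    exact ⟨y, hy, z, hz, rfl⟩
  -- `N` is abelian
  have hNab : ∀ a ∈ N, ∀ b ∈ N, a * b = b * a := by
    have h1 : ⁅N, N⁆ < N := Group.IsSolvable.commutator_lt_of_ne_bot hN0
    have h2 : ⁅N, N⁆ = ⊥ := (hmin _ inferInstance h1.le).resolve_right h1.ne
    intro a ha b hb
    have : ⁅a, b⁆ ∈ ⁅N, N⁆ := Subgroup.commutator_mem_commutator ha hb
    rwa [h2, Subgroup.mem_bot, commutatorElement_eq_one_iff_mul_comm] at this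
  have hinf : N ⊓ H = ⊥ := by
    have hn : (N ⊓ H).Normal := by
      constructor
      rintro x ⟨hxN, hxH⟩ g
      refine ⟨hNn.conj_mem x hxN g, ?_⟩
      obtain ⟨n, hn, h, hh, rfl⟩ := hdec g
      have h1 : h * x * h⁻¹ ∈ N := hNn.conj_mem x hxN h
      have h2 : n * h * x * (n * h)⁻¹ = h * x * h⁻¹ := by
        have := hNab n hn _ h1
        calc n * h * x * (n * h)⁻¹ = n * (h * x * h⁻¹) * n⁻¹ := by group
          _ = _ := by rw [this]; group
      change n * h * x * (n * h)⁻¹ ∈ H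
      rw [h2]
      exact H.mul_mem (H.mul_mem hh hxH) (H.inv_mem hh)
    rcases hmin _ hn inf_le_left with h | h
    · exact h
    · exact absurd (inf_eq_left.1 h) hNH
  obtain ⟨L, hL, hNL, hLH, -⟩ := hP N H hNn hNK hHmax.1 hdec
  have hLK : L ⊓ K = ⊥ := by
    by_contra h0
    exact hX ⟨L ⊓ K, inferInstance, h0, inf_le_right, fun h => hNL (h.trans inf_le_left)⟩
  have hLN : ∀ l ∈ L, ∀ a ∈ N, l * a = a * l := by
    intro l hl a ha
    refine Subgroup.commute_of_normal_of_disjoint L N hL hNn ?_ l a hl ha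
    rw [disjoint_iff]
    exact le_bot_iff.1 (hLK ▸ inf_le_inf_left L hNK)
  obtain ⟨l, hlL, hlH⟩ := SetLike.not_le_iff_exists.1 hLH
  obtain ⟨a, ha, h, hh, hl⟩ := hdec l
  have ha1 : a ≠ 1 := by
    rintro rfl
    apply hlH; rw [hl, one_mul]; exact hh
  have hhN : ∀ b ∈ N, h * b = b * h := by
    intro b hb
    have e : h = a⁻¹ * l := by rw [hl]; group
    have e1 := hLN l hlL b hb
    have e2 := hNab _ (N.inv_mem ha) b hb
    rw [e, mul_assoc, e1, ← mul_assoc, e2, mul_assoc]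
  -- conjugates of `h` lie in `H`
  have hconj : ∀ d : G, d * h * d⁻¹ ∈ H := by
    intro d
    obtain ⟨n, hn, k, hk, rfl⟩ := hdec d
    have h1 : (k * h * k⁻¹) * n = n * (k * h * k⁻¹) := by
      have h2 := hhN (k⁻¹ * n * k) (by simpa using hNn.conj_mem n hn k⁻¹)
      calc (k * h * k⁻¹) * n = k * (h * (k⁻¹ * n * k)) * k⁻¹ := by group
        _ = _ := by rw [h2]; group
    have h3 : n * k * h * (n * k)⁻¹ = k * h * k⁻¹ := by
      calc n * k * h * (n * k)⁻¹ = n * (k * h * k⁻¹) * n⁻¹ := by group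
        _ = _ := by rw [← h1]; group
    rw [h3]
    exact H.mul_mem (H.mul_mem hk hh) (H.inv_mem hk)
  have hkey : ∀ D : Subgroup G, D.Normal → L ⊓ D = ⊥ → ∀ n ∈ N, ∀ d ∈ D, d * n = n * d := by
    intro D hD hLD
    have hda : ∀ d ∈ D, d * a = a * d := by
      intro d hd
      have hcl : d * l = l * d :=
        (Subgroup.commute_of_normal_of_disjoint L D hL hD (disjoint_iff.2 hLD) l d hlL hd).symm
      have e1 : a⁻¹ * (d * a * d⁻¹) = h * (d * h * d⁻¹)⁻¹ := by
        have : d * (a * h) * d⁻¹ = a * h := by rw [← hl, hcl]; group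
        calc a⁻¹ * (d * a * d⁻¹) = a⁻¹ * (d * (a * h) * d⁻¹) * (d * h * d⁻¹)⁻¹ := by group
          _ = _ := by rw [this]; group
      have e2 : a⁻¹ * (d * a * d⁻¹) ∈ N ⊓ H := by
        refine ⟨N.mul_mem (N.inv_mem ha) (hNn.conj_mem a ha d), ?_⟩
        change a⁻¹ * (d * a * d⁻¹) ∈ H
        rw [e1]
        exact H.mul_mem hh (H.inv_mem (hconj d))
      rw [hinf, Subgroup.mem_bot, inv_mul_eq_one] at e2
      rw [eq_mul_inv_iff_mul_eq] at e2
      exact e2.symm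
    have hCn : (N ⊓ Subgroup.centralizer (D : Set G)).Normal := inferInstance
    have haC : a ∈ N ⊓ Subgroup.centralizer (D : Set G) :=
      ⟨ha, Subgroup.mem_centralizer_iff.2 hda⟩
    rcases hmin _ hCn inf_le_left with h0 | h0
    · rw [h0, Subgroup.mem_bot] at haC
      exact absurd haC ha1
    · intro n hn d hd
      rw [← h0] at hn
      exact Subgroup.mem_centralizer_iff.1 hn.2 d hd
  refine nilpotent_of_central N B ?_ hBN
  by_cases hLB : L ⊓ B = ⊥
  · exact hkey B hB hLB
  · have hKN := hkey K hK hLK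
    have hBe : (L ⊓ B) ⊔ K = B := by
      rcases hchief ((L ⊓ B) ⊔ K) inferInstance le_sup_right (sup_le inf_le_right hKB) with h0 | h0
      · exfalso
        apply hLB
        have : L ⊓ B ≤ L ⊓ K := le_inf inf_le_left (le_sup_left.trans h0.le)
        rw [hLK] at this
        exact le_bot_iff.1 this
      · exact h0
    intro n hn b hb
    rw [← hBe] at hb
    obtain ⟨y, hy, z, hz, rfl⟩ := Subgroup.mem_sup_of_normal_right.1 hb
    rw [mul_assoc, hKN n hn z hz, ← mul_assoc, hLN y hy.1 n hn, mul_assoc]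

theorem stmt_10 {G : Type} [Group G] [Finite G] (χ : FDRep ℂ G) (hχ : Simple χ)
    (hmaxcod : ∀ ψ : FDRep ℂ G, Simple ψ → codeg ψ ≤ codeg χ)
    (hnotnilp : ¬ Group.IsNilpotent G) (hsol : IsSolvable G)
    (F : Subgroup G)
    (hF : IsGreatest {N : Subgroup G | N.Normal ∧ Group.IsNilpotent ↥N} F) :
    charKer χ < F := by
  have hsol' : Group.IsSolvable G := hsol
  have hP : CompProp G (charKer χ) := fun N H _ hNK hH hNH =>
    lemmaA χ hχ hmaxcod N hNK H hH hNH
  have hKn := charKer_normal χ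
  by_cases hK : charKer χ = ⊤
  · exfalso
    apply hnotnilp
    have h1 : Group.IsNilpotent (⊤ : Subgroup G) :=
      mainT _ G rfl hsol' (charKer χ) ⊤ hKn inferInstance le_top (by rw [hK]; exact le_top)
        (fun X _ h _ => by rw [hK] at h ⊢; exact Or.inl (top_le_iff.1 h)) hP
    exact Group.nilpotent_of_mulEquiv Subgroup.topEquiv
  obtain ⟨B, ⟨hB, hKB⟩, hBmin⟩ := WellFounded.has_min
    (wellFounded_lt : WellFounded (fun a b : Subgroup G => a < b))
    {X : Subgroup G | X.Normal ∧ charKer χ < X} ⟨⊤, inferInstance, lt_top_iff_ne_top.2 hK⟩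
  have hchief : ∀ X : Subgroup G, X.Normal → charKer χ ≤ X → X ≤ B → X = charKer χ ∨ X = B := by
    intro X hX h1 h2
    by_contra hcon
    push Not at hcon
    exact hBmin X ⟨hX, lt_of_le_of_ne h1 (Ne.symm hcon.1)⟩ (lt_of_le_of_ne h2 hcon.2)
  have hBB : ⁅B, B⁆ ≤ charKer χ := by
    rcases hchief (⁅B, B⁆ ⊔ charKer χ) inferInstance le_sup_right
      (sup_le (Subgroup.commutator_le_left B B) hKB.le) with h | h
    · exact le_sup_left.trans h.le
    · exfalso
      set m := QuotientGroup.mk' (charKer χ) with hm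
      have hne : B.map m ≠ ⊥ := by
        intro h0
        rw [Subgroup.map_eq_bot_iff, hm, QuotientGroup.ker_mk'] at h0
        exact absurd hKB (not_lt_of_ge h0)
      have hlt := Group.IsSolvable.commutator_lt_of_ne_bot hne
      apply hlt.ne
      rw [← Subgroup.map_commutator]
      conv_rhs => rw [← h, Subgroup.map_sup]
      have : (charKer χ).map m = ⊥ := by
        rw [Subgroup.map_eq_bot_iff, hm, QuotientGroup.ker_mk']
      rw [this, sup_bot_eq]
  have hBnil : Group.IsNilpotent B := mainT _ G rfl hsol' (charKer χ) B hKn hB hKB.le hBB hchief hP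
  exact lt_of_lt_of_le hKB (hF.2 ⟨hB, hBnil⟩)
end

section
/- Let G be a finite group acting faithfully and fixed-point-freely on a nontrivial finite vector space V (i.e., no nonidentity element of G fixes a nonzero vector). If G is solvable and its Fitting height is at least 3, then the Fitting subgroup F(G) is the direct product of a generalized quaternion 2-group and a cyclic group of odd order. -/
open CategoryTheory

/-- `M/N` is nilpotent: some term of the lower central series of `M` (relative to `M`)
lands in `N`. -/
def nilpotentFactor {G : Type} [Group G] (N M : Subgroup G) : Prop :=
  ∃ m : ℕ, (fun K => ⁅K, M⁆)^[m] M ≤ N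

/-- The Fitting height: the length of the shortest normal series with nilpotent factors. -/
noncomputable def fittingHeight (G : Type) [Group G] : ℕ :=
  sInf {n | ∃ c : Fin (n + 1) → Subgroup G, c 0 = ⊥ ∧ c (Fin.last n) = ⊤ ∧
    (∀ i, (c i).Normal) ∧ (∀ i : Fin n, c i.castSucc ≤ c i.succ) ∧
    ∀ i : Fin n, nilpotentFactor (c i.castSucc) (c i.succ)}


lemma fpf_comm_cyclic {A : Type} [CommGroup A] [Finite A] {F : Type} [Field F] {V : Type}
    [AddCommGroup V] [Module F V] [Nontrivial V]
    (ρ : A →* (V ≃ₗ[F] V))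
    (hfpf : ∀ g : A, g ≠ 1 → ∀ v : V, v ≠ 0 → ρ g v ≠ v) : IsCyclic A := by
  let σ : Representation F A V := LinearEquiv.automorphismGroup.toLinearMapMonoidHom.comp ρ
  have : IsNoetherianRing (MonoidAlgebra F A) := Algebra.FiniteType.isNoetherianRing F _
  have : Nontrivial σ.asModule := σ.asModuleEquiv.toEquiv.nontrivial
  obtain ⟨I, hI⟩ := associatedPrimes.nonempty (MonoidAlgebra F A) σ.asModule
  obtain ⟨hp, x, hx⟩ := isAssociatedPrime_iff.1 hI
  have hx0 : x ≠ 0 := by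
    rintro rfl
    apply hp.ne_top
    rw [hx]; ext; simp
  refine isCyclic_of_injective_ringHom
    ((Ideal.Quotient.mk I).toMonoidHom.comp (MonoidAlgebra.of F A)) ?_
  rw [injective_iff_map_eq_one]
  intro g hg
  by_contra hne
  have h1 : MonoidAlgebra.of F A g - 1 ∈ I := by
    rw [← Ideal.Quotient.eq_zero_iff_mem, map_sub, map_one, sub_eq_zero]
    exact hg
  rw [hx, Submodule.mem_colon_singleton, Submodule.mem_bot, sub_smul, one_smul, sub_eq_zero] at h1
  have h2 := congrArg σ.asModuleEquiv h1
  rw [Representation.asModuleEquiv_map_smul, Representation.asAlgebraHom_of] at h2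
  exact hfpf g hne (σ.asModuleEquiv x) (by simpa using hx0) h2

/-- All abelian subgroups are cyclic. -/
def AbCyc (G : Type) [Group G] : Prop :=
  ∀ A : Subgroup G, (∀ x ∈ A, ∀ y ∈ A, x * y = y * x) → IsCyclic A

lemma AbCyc.sub {G : Type} [Group G] (h : AbCyc G) (H : Subgroup G) : AbCyc H := by
  intro A hA
  have := h (A.map H.subtype) (by
    rintro _ ⟨x, hx, rfl⟩ _ ⟨y, hy, rfl⟩
    simpa using congrArg H.subtype (hA x hx y hy))
  exact isCyclic_of_injective (A.equivMapOfInjective H.subtype H.subtype_injective).toMonoidHom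
    (MulEquiv.injective _)

lemma abCyc_of_fpf {G : Type} [Group G] [Finite G] {F : Type} [Field F] {V : Type}
    [AddCommGroup V] [Module F V] [Nontrivial V]
    (ρ : G →* (V ≃ₗ[F] V))
    (hfpf : ∀ g : G, g ≠ 1 → ∀ v : V, v ≠ 0 → ρ g v ≠ v) : AbCyc G := by
  intro A hA
  let _ : CommGroup A := { (inferInstance : Group A) with
    mul_comm := fun x y => Subtype.ext (hA x x.2 y y.2) }
  refine fpf_comm_cyclic (A := A) (ρ.comp A.subtype) ?_
  intro g hg v hv
  exact hfpf g (by simpa using hg) v hv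

lemma AbCyc.mem_zpowers {G : Type} [Group G] [Finite G] (h : AbCyc G) {p : ℕ} (hp : p.Prime)
    {x y : G} (hxy : Commute x y) (hx : x ^ p = 1) (hx1 : x ≠ 1) (hy : y ^ p = 1) :
    y ∈ Subgroup.zpowers x := by
  classical
  have hox : orderOf x = p := (Nat.dvd_prime hp).1 (orderOf_dvd_of_pow_eq_one hx) |>.resolve_left
    (by simpa using hx1)
  let A := Subgroup.closure ({x, y} : Set G)
  have hxA : x ∈ A := Subgroup.subset_closure (by simp)
  have hyA : y ∈ A := Subgroup.subset_closure (by simp)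
  have hA : IsMulCommutative A := Subgroup.isMulCommutative_closure (by
    rintro a (rfl | rfl) b (rfl | rfl)
    · rfl
    · exact hxy
    · exact hxy.symm
    · rfl)
  have hc := h A (fun a ha b hb => by
    simpa using congrArg Subtype.val (hA.is_comm.comm (⟨a, ha⟩ : A) ⟨b, hb⟩))
  have := Fintype.ofFinite A
  have hle := IsCyclic.card_pow_eq_one_le (α := A) hp.pos
  let X : A := ⟨x, hxA⟩
  have hsub : (Finset.univ.filter (fun a : A => a ∈ Subgroup.zpowers X)) ⊆
      Finset.univ.filter (fun a : A => a ^ p = 1) := by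
    intro a ha
    simp only [Finset.mem_filter, Finset.mem_univ, true_and] at ha ⊢
    obtain ⟨k, rfl⟩ := ha
    have : X ^ p = 1 := Subtype.ext (by simpa [X] using hx)
    dsimp
    rw [← zpow_natCast, ← zpow_mul, mul_comm, zpow_mul, zpow_natCast, this, one_zpow]
  have hcard : (Finset.univ.filter (fun a : A => a ∈ Subgroup.zpowers X)).card = p := by
    rw [← Fintype.card_subtype, ← Nat.card_eq_fintype_card]
    have : Nat.card (Subgroup.zpowers X) = p := by
      rw [Nat.card_zpowers, ← hox]; exact Subgroup.orderOf_mk x hxA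
    exact this
  have heq := Finset.eq_of_subset_of_card_le hsub (by rw [hcard]; exact hle)
  have hyF : (⟨y, hyA⟩ : A) ∈ Finset.univ.filter (fun a : A => a ^ p = 1) := by
    simp only [Finset.mem_filter, Finset.mem_univ, true_and]
    exact Subtype.ext (by simpa using hy)
  rw [← heq] at hyF
  simp only [Finset.mem_filter, Finset.mem_univ, true_and] at hyF
  obtain ⟨k, hk⟩ := hyF
  exact ⟨k, by simpa [X] using congrArg Subtype.val hk⟩

lemma exists_self_centralizing {P : Type} [Group P] [Finite P] [Group.IsNilpotent P] :
    ∃ A : Subgroup P, A.Normal ∧ (∀ x ∈ A, ∀ y ∈ A, x * y = y * x) ∧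
      ∀ x : P, (∀ y ∈ A, x * y = y * x) → x ∈ A := by
  classical
  let S : Set (Subgroup P) := {A | A.Normal ∧ (∀ x ∈ A, ∀ y ∈ A, x * y = y * x)}
  have hS : S.Nonempty := ⟨⊥, inferInstance, by
    intro x hx y hy; rw [Subgroup.mem_bot] at hx hy; simp [hx, hy]⟩
  obtain ⟨A, hAm⟩ := (Set.toFinite S).exists_maximal hS
  obtain ⟨⟨hAn, hAc⟩, hmax⟩ := hAm
  refine ⟨A, hAn, hAc, ?_⟩
  by_contra! hcon
  obtain ⟨x, hx, hxA⟩ := hcon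
  have hex : ∃ k : ℕ, ∃ c ∈ Subgroup.upperCentralSeries P k, (∀ y ∈ A, c * y = y * c) ∧ c ∉ A := by
    obtain ⟨n, hn⟩ := Group.IsNilpotent.nilpotent P
    exact ⟨n, x, by rw [hn]; trivial, hx, hxA⟩
  obtain ⟨c, hc, hcA, hcn⟩ := Nat.find_spec hex
  have hmin := fun k => Nat.find_min hex (m := k)
  cases hk : Nat.find hex with
  | zero =>
    rw [hk] at hc
    simp only [Subgroup.upperCentralSeries_zero, Subgroup.mem_bot] at hc
    exact hcn (hc ▸ A.one_mem)
  | succ k =>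
    rw [hk] at hc hmin
    have hconj : ∀ g : P, c * g * c⁻¹ * g⁻¹ ∈ A := by
      intro g
      by_contra hg
      refine hmin k (Nat.lt_succ_self k) ⟨_, Subgroup.mem_upperCentralSeries_succ_iff.1 hc g, ?_, hg⟩
      intro y hy
      have h1 : ∀ y ∈ A, g * c⁻¹ * g⁻¹ * y = y * (g * c⁻¹ * g⁻¹) := by
        intro y hy
        have hm := hAn.conj_mem y hy g⁻¹
        have h2 := hcA _ hm
        calc g * c⁻¹ * g⁻¹ * y = g * c⁻¹ * ((g⁻¹ * y * g⁻¹⁻¹) * c) * c⁻¹ * g⁻¹ := by group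
          _ = y * (g * c⁻¹ * g⁻¹) := by rw [← h2]; group
      calc c * g * c⁻¹ * g⁻¹ * y = c * (g * c⁻¹ * g⁻¹ * y) := by group
        _ = c * y * (g * c⁻¹ * g⁻¹) := by rw [h1 y hy]; group
        _ = y * (c * g * c⁻¹ * g⁻¹) := by rw [hcA y hy]; group
    -- B = A ⊔ zpowers c
    let B := Subgroup.closure ((A : Set P) ∪ {c})
    have hAB : A ≤ B := fun a ha => Subgroup.subset_closure (Or.inl ha)
    have hcB : c ∈ B := Subgroup.subset_closure (Or.inr rfl)
    have hBcomm : IsMulCommutative B := Subgroup.isMulCommutative_closure (by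
      rintro a (ha | rfl) b (hb | rfl)
      · exact hAc a ha b hb
      · exact (hcA a ha).symm
      · exact hcA b hb
      · rfl)
    have hBn : B.Normal := by
      refine ⟨fun b hb g => ?_⟩
      have : B ≤ B.comap (MulAut.conj g).toMonoidHom := by
        rw [Subgroup.closure_le]
        rintro a (ha | ha)
        · exact hAB (hAn.conj_mem a ha g)
        · rw [Set.mem_singleton_iff] at ha
          subst ha
          have h3 := B.mul_mem (B.inv_mem (hAB (hconj g))) hcB
          show g * a * g⁻¹ ∈ B
          have h4 := hAB (hconj g)
          have h5 := B.mul_mem (B.inv_mem h4) hcB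
          convert h5 using 1
          group
      exact this hb
    have hle := hmax (y := B) ⟨hBn, fun a ha b hb => by
      simpa using congrArg Subtype.val (hBcomm.is_comm.comm (⟨a, ha⟩ : B) ⟨b, hb⟩)⟩ hAB
    exact hcn (hle hcB)

lemma exists_solve {p : ℕ} (hp : p.Prime) (n : ℕ) (S s : ℤ) (hS : (p : ℤ) ^ 2 ∣ S - p)
    (hs : (p : ℤ) ∣ s) : ∃ j : ℤ, (p : ℤ) ^ n ∣ j * S + s := by
  obtain ⟨t, ht⟩ := hS
  obtain ⟨s', rfl⟩ := hs
  have hco : IsCoprime (1 + p * t : ℤ) ((p : ℤ) ^ n) :=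
    IsCoprime.pow_right ⟨1, -t, by ring⟩
  obtain ⟨α, β, h⟩ := hco
  refine ⟨-s' * α, p * s' * β, ?_⟩
  have hS : S = p * (1 + p * t) := by linear_combination ht
  rw [hS]
  linear_combination (-(p : ℤ) * s') * h

lemma twist_pow {P : Type} [Group P] {a x : P} {r : ℤ} (hr : x * a * x⁻¹ = a ^ r) (j : ℤ) (m : ℕ) :
    (a ^ j * x) ^ m = a ^ (j * ∑ i ∈ Finset.range m, r ^ i) * x ^ m := by
  have hconj : ∀ k : ℤ, x * a ^ k = a ^ (r * k) * x := by
    intro k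
    rw [zpow_mul, ← hr, conj_zpow]; group
  induction m with
  | zero => simp
  | succ m ih =>
    rw [pow_succ', ih, geom_sum_succ]
    calc a ^ j * x * (a ^ (j * ∑ i ∈ Finset.range m, r ^ i) * x ^ m)
        = a ^ j * (x * a ^ (j * ∑ i ∈ Finset.range m, r ^ i)) * x ^ m := by group
      _ = _ := by
        rw [hconj, mul_add, mul_one, add_comm, mul_left_comm j r, zpow_add, pow_succ' x m]
        simp only [mul_assoc]

lemma key {P : Type} [Group P] [Finite P] (hab : AbCyc P) {p : ℕ} [hp : Fact p.Prime] {a x : P}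
    {n : ℕ} (ho : orderOf a = p ^ n) (hself : ∀ y, y * a = a * y → y ∈ Subgroup.zpowers a)
    {r s : ℤ} (hr : x * a * x⁻¹ = a ^ r) (hs : x ^ p = a ^ s) (hx : x ∉ Subgroup.zpowers a) :
    (p : ℤ) ∣ s ∧ (p : ℤ) ^ n ∣ s * r - s ∧ (p : ℤ) ^ n ∣ r ^ p - 1 ∧ (p : ℤ) ∣ r - 1 ∧ 1 ≤ n ∧
      ∀ j : ℤ, ¬ (p : ℤ) ^ n ∣ j * ∑ i ∈ Finset.range p, r ^ i + s := by
  have hone : ∀ k : ℤ, (p : ℤ) ^ n ∣ k ↔ a ^ k = 1 := by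
    intro k
    rw [← orderOf_dvd_iff_zpow_eq_one, ho]; push_cast; rfl
  have hconj : ∀ k : ℤ, x * a ^ k = a ^ (r * k) * x := by
    intro k
    rw [zpow_mul, ← hr, conj_zpow]; group
  have hn : 1 ≤ n := by
    by_contra h0
    have : n = 0 := by omega
    subst this
    have ha : a = 1 := by simpa using ho
    exact hx (hself x (by simp [ha]))
  have h1 : (p : ℤ) ∣ s := by
    by_contra hps
    have hco : IsCoprime s ((p : ℤ) ^ n) := by
      refine IsCoprime.pow_right ?_
      exact ((Nat.prime_iff_prime_int.1 hp.out).coprime_iff_not_dvd.2 hps).symm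
    obtain ⟨α, β, h⟩ := hco
    apply hx
    apply hself
    have : a = (x ^ p) ^ α := by
      rw [hs, ← zpow_mul, ← mul_inv_eq_one, ← zpow_neg_one, ← zpow_mul]
      nth_rewrite 1 [← zpow_one a]
      rw [← zpow_add, ← hone]
      exact ⟨β, by linear_combination -h⟩
    rw [this]
    exact ((Commute.refl x).pow_right p).zpow_right α
  have h2 : (p : ℤ) ^ n ∣ s * r - s := by
    rw [hone, zpow_sub, mul_inv_eq_one, mul_comm s r]
    have := hconj s
    rw [← hs, ← pow_succ', pow_succ] at this
    rw [← mul_right_cancel this, hs]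
  have hpw : ∀ m : ℕ, x ^ m * a * (x ^ m)⁻¹ = a ^ (r ^ m) := by
    intro m
    induction m with
    | zero => simp
    | succ m ih =>
      rw [pow_succ' x, pow_succ' r]
      calc x * x ^ m * a * (x * x ^ m)⁻¹ = x * (x ^ m * a * (x ^ m)⁻¹) * x⁻¹ := by group
        _ = _ := by rw [ih, hconj]; group
  have h3 : (p : ℤ) ^ n ∣ r ^ p - 1 := by
    rw [hone, zpow_sub, ← hpw, hs]; group
  have h4 : (p : ℤ) ∣ r - 1 := by
    have h5 : (p : ℤ) ∣ r ^ p - 1 := (dvd_pow_self _ (by omega)).trans h3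
    rw [← ZMod.intCast_zmod_eq_zero_iff_dvd] at h5 ⊢
    push_cast at h5 ⊢
    rwa [ZMod.pow_card] at h5
  refine ⟨h1, h2, h3, h4, hn, ?_⟩
  intro j hj
  set y := a ^ j * x with hy
  have hyp : y ^ p = 1 := by
    rw [hy, twist_pow hr, hs, ← zpow_add, ← hone]; exact hj
  have hyA : y ∉ Subgroup.zpowers a := by
    intro h
    exact hx ((Subgroup.mul_mem_cancel_left _ (Subgroup.zpow_mem_zpowers a j)).1 h)
  set z := a ^ (p ^ (n - 1)) with hz
  have hpn : p ^ n = p ^ (n - 1) * p := by rw [← pow_succ]; congr 1; omega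
  have hzp : z ^ p = 1 := by rw [hz, ← pow_mul, ← hpn, ← ho, pow_orderOf_eq_one]
  have hz1 : z ≠ 1 := by
    rw [hz]
    intro h
    have := orderOf_dvd_of_pow_eq_one h
    rw [ho] at this
    have := (Nat.pow_dvd_pow_iff_le_right hp.out.one_lt).1 this
    omega
  have hcomm : Commute z y := by
    have hxz : x * z = z * x := by
      have := hconj ((p ^ (n - 1) : ℕ) : ℤ)
      rw [zpow_natCast] at this
      rw [hz, this]
      congr 1
      rw [← mul_inv_eq_one, ← zpow_natCast, ← zpow_neg, ← zpow_add, ← hone]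
      obtain ⟨u, hu⟩ := h4
      refine ⟨u, ?_⟩
      have : ((p : ℤ)) ^ n = (p : ℤ) ^ (n - 1) * p := by exact_mod_cast hpn
      rw [this]; push_cast
      linear_combination (p : ℤ) ^ (n - 1) * hu
    refine Commute.mul_right ?_ hxz.symm
    exact ((Commute.refl a).pow_left _).zpow_right j
  have := hab.mem_zpowers hp.out hcomm hzp hz1 hyp
  refine hyA (Subgroup.zpowers_le.2 ?_ this)
  exact Subgroup.pow_mem _ (Subgroup.mem_zpowers a) _

lemma key_odd {P : Type} [Group P] [Finite P] (hab : AbCyc P) {p : ℕ} [hp : Fact p.Prime]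
    (hodd : Odd p) {a x : P}
    {n : ℕ} (ho : orderOf a = p ^ n) (hself : ∀ y, y * a = a * y → y ∈ Subgroup.zpowers a)
    {r s : ℤ} (hr : x * a * x⁻¹ = a ^ r) (hs : x ^ p = a ^ s) : x ∈ Subgroup.zpowers a := by
  by_contra hx
  obtain ⟨h1, h2, h3, h4, hn, h5⟩ := key hab ho hself hr hs hx
  obtain ⟨b, hb⟩ := h4
  have := odd_sq_dvd_geom_sum₂_sub (R := ℤ) (a := 1) b hodd
  simp only [one_pow, mul_one] at this
  obtain ⟨j, hj⟩ := exists_solve hp.out n _ s this h1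
  refine h5 j ?_
  have hrb : r = 1 + p * b := by linear_combination hb
  rw [hrb]; exact hj

lemma key_two {P : Type} [Group P] [Finite P] (hab : AbCyc P) {a x : P}
    {n : ℕ} (ho : orderOf a = 2 ^ n) (hself : ∀ y, y * a = a * y → y ∈ Subgroup.zpowers a)
    {r s : ℤ} (hr : x * a * x⁻¹ = a ^ r) (hs : x ^ 2 = a ^ s) (hx : x ∉ Subgroup.zpowers a) :
    2 ≤ n ∧ (2 : ℤ) ^ n ∣ r + 1 ∧ (2 : ℤ) ^ n ∣ s - 2 ^ (n - 1) := by
  have : Fact (Nat.Prime 2) := ⟨Nat.prime_two⟩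
  obtain ⟨h1, h2, h3, h4, hn, h5⟩ := key hab (p := 2) ho hself hr hs hx
  simp only [Finset.sum_range_succ, Finset.sum_range_zero, pow_zero, pow_one, zero_add,
    Nat.cast_ofNat] at h1 h2 h3 h4 h5
  have h14 : (4 : ℤ) ∣ r + 1 := by
    by_contra h
    have : (2 : ℤ) ^ 2 ∣ (1 + r) - 2 := by omega
    obtain ⟨j, hj⟩ := exists_solve Nat.prime_two n (1 + r) s (by exact_mod_cast this)
      (by exact_mod_cast h1)
    exact h5 j (by exact_mod_cast hj)
  -- `r - 1 = 2 u` with `u` odd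
  obtain ⟨u, hu⟩ := h4
  have hodd : IsCoprime ((2 : ℤ) ^ (n - 1)) u := by
    refine IsCoprime.pow_left ?_
    rw [Int.isCoprime_iff_gcd_eq_one, ← Int.isCoprime_iff_gcd_eq_one]
    have : u % 2 = 1 := by omega
    exact ⟨-(u / 2), 1, by omega⟩
  have hpn : (2 : ℤ) ^ n = 2 * 2 ^ (n - 1) := by
    rw [← pow_succ']; congr 1; omega
  have hcancel : ∀ t : ℤ, (2 : ℤ) ^ n ∣ t * (r - 1) → (2 : ℤ) ^ (n - 1) ∣ t := by
    intro t ht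
    rw [hpn, hu, mul_left_comm] at ht
    exact hodd.dvd_of_dvd_mul_right ((mul_dvd_mul_iff_left two_ne_zero).1 ht)
  obtain ⟨s', hs'⟩ := hcancel s (by convert h2 using 1; ring)
  obtain ⟨r', hr'⟩ := hcancel (r + 1) (by convert h3 using 1; ring)
  have hs'o : s' % 2 = 1 := by
    by_contra h
    refine h5 0 ⟨s' / 2, ?_⟩
    have : s' = 2 * (s' / 2) := by omega
    rw [hpn, zero_mul, zero_add, hs']
    linear_combination (2 : ℤ) ^ (n - 1) * this
  have hr'e : r' % 2 = 0 := by
    by_contra h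
    refine h5 1 ⟨(r' + s') / 2, ?_⟩
    have : r' + s' = 2 * ((r' + s') / 2) := by omega
    rw [hpn]
    linear_combination (2 : ℤ) ^ (n - 1) * this + hr' + hs'
  refine ⟨?_, ⟨r' / 2, ?_⟩, ⟨s' / 2, ?_⟩⟩
  · by_contra h
    have : n = 1 := by omega
    subst this
    simp at hs'
    omega
  · have : r' = 2 * (r' / 2) := by omega
    rw [hpn]
    linear_combination (2 : ℤ) ^ (n - 1) * this + hr'
  · have : s' = 2 * (s' / 2) + 1 := by omega
    rw [hpn]
    linear_combination (2 : ℤ) ^ (n - 1) * this + hs'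

lemma exists_pow_step {P : Type} [Group P] {p : ℕ} (hP : IsPGroup p P) (A : Subgroup P) {x : P}
    (hx : x ∉ A) : ∃ k : ℕ, x ^ p ^ k ∉ A ∧ (x ^ p ^ k) ^ p ∈ A := by
  classical
  have hex : ∃ k : ℕ, x ^ p ^ k ∈ A := by
    obtain ⟨k, hk⟩ := hP x
    exact ⟨k, hk ▸ A.one_mem⟩
  have h1 := Nat.find_spec hex
  have h2 := fun m => Nat.find_min hex (m := m)
  cases hk : Nat.find hex with
  | zero => rw [hk] at h1; simp at h1; exact absurd h1 hx
  | succ k =>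
    rw [hk] at h1 h2
    refine ⟨k, h2 k (Nat.lt_succ_self k), ?_⟩
    rwa [← pow_mul, ← pow_succ]

lemma pgroup_struct {P : Type} [Group P] [Finite P] (hab : AbCyc P) {p : ℕ} [Fact p.Prime]
    (hP : IsPGroup p P) : ∃ (a : P) (n : ℕ), orderOf a = p ^ n ∧
      (∀ y, y * a = a * y → y ∈ Subgroup.zpowers a) ∧ ∀ x : P, ∃ r : ℤ, x * a * x⁻¹ = a ^ r := by
  have := hP.isNilpotent
  obtain ⟨A, hAn, hAc, hself⟩ := exists_self_centralizing (P := P)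
  obtain ⟨a, ha⟩ := (hab A hAc).exists_generator
  have hA : A = Subgroup.zpowers (a : P) := by
    apply le_antisymm
    · intro y hy
      obtain ⟨k, hk⟩ := ha ⟨y, hy⟩
      exact ⟨k, by simpa using congrArg Subtype.val hk⟩
    · exact Subgroup.zpowers_le.2 a.2
  obtain ⟨n, hn⟩ := (IsPGroup.iff_orderOf.1 hP) (a : P)
  refine ⟨a, n, hn, ?_, ?_⟩
  · intro y hy
    rw [← hA]
    apply hself
    intro z hz
    rw [hA] at hz
    obtain ⟨k, rfl⟩ := hz
    exact Commute.zpow_right hy k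
  · intro x
    obtain ⟨r, hr⟩ := hA.le (hAn.conj_mem a a.2 x)
    exact ⟨r, hr.symm⟩

lemma odd_cyclic {P : Type} [Group P] [Finite P] (hab : AbCyc P) {p : ℕ} [Fact p.Prime]
    (hodd : Odd p) (hP : IsPGroup p P) : IsCyclic P := by
  obtain ⟨a, n, ho, hself, hr⟩ := pgroup_struct hab hP
  refine ⟨a, fun x => ?_⟩
  by_contra hx
  obtain ⟨k, hk, s, hs⟩ := exists_pow_step hP (Subgroup.zpowers a) hx
  obtain ⟨r, hr⟩ := hr (x ^ p ^ k)
  exact hk (key_odd hab hodd ho hself hr hs.symm)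

lemma quat_iso {P : Type} [Group P] {a x : P} {m : ℕ} (ho : orderOf a = 2 * m)
    (hx : x ∉ Subgroup.zpowers a) (hinv : x * a * x⁻¹ = a⁻¹) (hsq : x ^ 2 = a ^ m)
    (hall : ∀ y, y ∈ Subgroup.zpowers a ∨ x⁻¹ * y ∈ Subgroup.zpowers a) :
    Nonempty (QuaternionGroup m ≃* P) := by
  let φ : ZMod (2 * m) →+ Additive P := ZMod.lift (2 * m)
    ⟨zmultiplesHom (Additive P) (Additive.ofMul a), by
      have : a ^ (2 * m) = 1 := by rw [← ho, pow_orderOf_eq_one]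
      change ((2 * m : ℕ) : ℤ) • Additive.ofMul a = 0
      rw [natCast_zsmul]
      exact this⟩
  let e : ZMod (2 * m) → P := fun i => (φ i).toMul
  have hcast : ∀ k : ℤ, e (k : ZMod (2 * m)) = a ^ k := by
    intro k
    simp only [e, φ, ZMod.lift_coe]
    rfl
  have hadd : ∀ i j, e (i + j) = e i * e j := by
    intro i j; simp only [e, map_add]; rfl
  have hsub : ∀ i j, e (j - i) = (e i)⁻¹ * e j := by
    intro i j
    rw [sub_eq_neg_add, hadd]; simp only [e, map_neg]; rfl
  have hsurj : ∀ i : ZMod (2 * m), ∃ k : ℤ, e i = a ^ k := by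
    intro i
    obtain ⟨k, rfl⟩ := ZMod.intCast_surjective i
    exact ⟨k, hcast k⟩
  have hxe : ∀ i, e i * x = x * (e i)⁻¹ := by
    intro i
    obtain ⟨k, hk⟩ := hsurj i
    rw [hk, ← inv_zpow, ← hinv]
    have h2 : x * (x * a * x⁻¹) * x⁻¹ = a := by
      rw [hinv]
      calc x * a⁻¹ * x⁻¹ = (x * a * x⁻¹)⁻¹ := by group
        _ = a := by rw [hinv, inv_inv]
    calc a ^ k * x = (x * (x * a * x⁻¹) * x⁻¹) ^ k * x := by rw [h2]
      _ = x * (x * a * x⁻¹) ^ k := by rw [conj_zpow]; group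
  have hm : e (m : ZMod (2 * m)) = x * x := by
    have := hcast (m : ℤ)
    rw [← sq, hsq]
    simpa using this
  let f : QuaternionGroup m →* P := MonoidHom.mk'
    (fun q => match q with
      | .a i => e i
      | .xa i => x * e i) (by
      rintro (i | i) (j | j)
      · simp only [QuaternionGroup.a_mul_a, hadd]
      · simp only [QuaternionGroup.a_mul_xa, hsub]
        rw [← mul_assoc, ← mul_assoc, hxe]
      · simp only [QuaternionGroup.xa_mul_a, hadd, mul_assoc]
      · simp only [QuaternionGroup.xa_mul_xa]
        rw [add_sub_assoc, hadd, hsub, hm]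
        calc x * x * ((e i)⁻¹ * e j) = x * (x * (e i)⁻¹) * e j := by group
          _ = x * e i * (x * e j) := by rw [← hxe]; group)
  refine ⟨MulEquiv.ofBijective f ⟨?_, ?_⟩⟩
  · rw [injective_iff_map_eq_one]
    rintro (i | i) h
    · obtain ⟨k, rfl⟩ := ZMod.intCast_surjective i
      have h1 : e (k : ZMod (2 * m)) = 1 := h
      rw [hcast, ← orderOf_dvd_iff_zpow_eq_one, ho] at h1
      rw [(ZMod.intCast_zmod_eq_zero_iff_dvd k (2 * m)).2 h1]
      rfl
    · have h1 : x * e i = 1 := h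
      obtain ⟨k, hk⟩ := hsurj i
      refine absurd ?_ hx
      rw [eq_inv_of_mul_eq_one_left h1, hk]
      exact Subgroup.inv_mem _ (Subgroup.zpow_mem_zpowers a k)
  · intro y
    rcases hall y with ⟨k, hk⟩ | ⟨k, hk⟩
    · exact ⟨.a k, (hcast k).trans hk⟩
    · refine ⟨.xa k, ?_⟩
      show x * e k = y
      rw [hcast]
      dsimp at hk
      rw [hk]; group

lemma two_group {P : Type} [Group P] [Finite P] (hab : AbCyc P) (hP : IsPGroup 2 P) :
    IsCyclic P ∨ ∃ k : ℕ, 1 ≤ k ∧ Nonempty (QuaternionGroup (2 ^ k) ≃* P) := by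
  have : Fact (Nat.Prime 2) := ⟨Nat.prime_two⟩
  obtain ⟨a, n, ho, hself, hr⟩ := pgroup_struct hab hP
  by_cases hcyc : ∀ x, x ∈ Subgroup.zpowers a
  · exact Or.inl ⟨a, hcyc⟩
  right
  push Not at hcyc
  obtain ⟨x, hx⟩ := hcyc
  have hone : ∀ k : ℤ, (2 : ℤ) ^ n ∣ k ↔ a ^ k = 1 := by
    intro k
    rw [← orderOf_dvd_iff_zpow_eq_one, ho]; push_cast; rfl
  have main : ∀ y, y ∉ Subgroup.zpowers a →
      2 ≤ n ∧ y * a * y⁻¹ = a⁻¹ ∧ y ^ 2 = a ^ (2 ^ (n - 1)) := by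
    intro y hy
    obtain ⟨k, hk, s, hs⟩ := exists_pow_step hP _ hy
    obtain ⟨r, hr1⟩ := hr (y ^ 2 ^ k)
    obtain ⟨hn, h1, h2⟩ := key_two hab ho hself hr1 hs.symm hk
    cases k with
    | zero =>
      simp only [pow_zero, pow_one] at hr1 hs
      refine ⟨hn, ?_, ?_⟩
      · rw [hr1]
        have := (hone _).1 h1
        rw [zpow_add, zpow_one] at this
        exact eq_inv_of_mul_eq_one_left this
      · rw [← hs]
        have := (hone _).1 h2
        rw [zpow_sub, mul_inv_eq_one] at this
        rw [this]
        exact_mod_cast zpow_natCast a (2 ^ (n - 1))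
    | succ k =>
      exfalso
      obtain ⟨t, ht⟩ := hr (y ^ 2 ^ k)
      set w := y ^ 2 ^ k with hw
      have hz : y ^ 2 ^ (k + 1) = w * w := by rw [hw, pow_succ, pow_mul, sq]
      rw [hz] at hr1
      have h3 : a ^ (t * t) = a ^ r := by
        rw [← hr1, zpow_mul, ← ht, conj_zpow, ← ht]; group
      have h4 : (2 : ℤ) ^ n ∣ t * t - r := by
        rw [hone, zpow_sub, h3, mul_inv_cancel]
      have h5 : (4 : ℤ) ∣ t * t + 1 := by
        have h6 : (4 : ℤ) ∣ 2 ^ n := by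
          have := pow_dvd_pow (2 : ℤ) hn
          norm_num at this ⊢
          exact this
        have := dvd_add (h6.trans h4) (h6.trans h1)
        rwa [show t * t - r + (r + 1) = t * t + 1 by ring] at this
      rcases Int.even_or_odd' t with ⟨c, rfl | rfl⟩
      · have : (2 * c) * (2 * c) + 1 = 4 * (c * c) + 1 := by ring
        omega
      · have : (2 * c + 1) * (2 * c + 1) + 1 = 4 * (c * c + c) + 2 := by ring
        omega
  obtain ⟨hn, hinv, hsq⟩ := main x hx
  refine ⟨n - 1, by omega, quat_iso (x := x) ?_ hx hinv hsq ?_⟩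
  · rw [ho, ← pow_succ']; congr 1; omega
  · intro y
    by_cases hy : y ∈ Subgroup.zpowers a
    · exact Or.inl hy
    · right
      obtain ⟨_, hyinv, _⟩ := main y hy
      apply hself
      have h1 : y * a = a⁻¹ * y := by rw [← hyinv]; group
      have h2 : x⁻¹ * a⁻¹ = a * x⁻¹ := by rw [← hinv]; group
      rw [mul_assoc, h1, ← mul_assoc, h2, mul_assoc]

lemma nilp_decomp {N : Type} [Group N] [Finite N] [Group.IsNilpotent N] (hab : AbCyc N)
    [Fact (Nat.Prime 2)] (P : Sylow 2 N) :
    ∃ m : ℕ, Odd m ∧ Nonempty (N ≃* P × Multiplicative (ZMod m)) := by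
  have hPn : (P : Subgroup N).Normal := inferInstance
  obtain ⟨H, hH⟩ := Subgroup.exists_right_complement'_of_coprime P.card_coprime_index
  have hcardH : Nat.card H = (P : Subgroup N).index := hH.symm.index_eq_card.symm
  have hodd : Odd (Nat.card H) := by
    rw [hcardH, ← Nat.not_even_iff_odd, even_iff_two_dvd]
    exact P.not_dvd_index
  have hZ : IsZGroup H := by
    refine ⟨fun p hp Q => ?_⟩
    have : Fact p.Prime := ⟨hp⟩
    rcases hp.eq_two_or_odd' with rfl | hpo
    · have h1 : Nat.card Q = 1 := by
        obtain ⟨k, hk⟩ := IsPGroup.iff_card.1 Q.isPGroup'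
        have h2 := Subgroup.card_subgroup_dvd_card (Q : Subgroup H)
        have h3 : Odd (Nat.card Q) := Odd.of_dvd_nat hodd h2
        cases k with
        | zero => simpa using hk
        | succ k =>
          rw [hk, pow_succ] at h3
          exact absurd h3 (by simp)
      have : Subsingleton Q := (Nat.card_eq_one_iff_unique.1 h1).1
      infer_instance
    · exact odd_cyclic ((hab.sub H).sub Q) hpo Q.isPGroup'
  have hcyc : IsCyclic H := inferInstance
  have hcomm : H ≤ Subgroup.centralizer ((P : Subgroup N) : Set N) := by
    by_contra hnot
    set K := (Subgroup.centralizer ((P : Subgroup N) : Set N)).subgroupOf H with hK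
    have hK1 : K.index ≠ 1 := by
      rw [Ne, Subgroup.index_eq_one, hK, Subgroup.subgroupOf_eq_top]; exact hnot
    obtain ⟨q, hq, hqd⟩ := Nat.exists_prime_and_dvd hK1
    have : Fact q.Prime := ⟨hq⟩
    obtain ⟨Q⟩ : Nonempty (Sylow q H) := inferInstance
    have hQK : (Q : Subgroup H) ≤ K := by
      have hq2 : q ≠ 2 := by
        rintro rfl
        have h2 : 2 ∣ Nat.card H := hqd.trans K.index_dvd_card
        rw [← even_iff_two_dvd, ← Nat.not_odd_iff_even] at h2
        exact h2 hodd
      obtain ⟨R, hR⟩ := (Q.isPGroup'.map H.subtype).exists_le_sylow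
      have hRn : (R : Subgroup N).Normal := inferInstance
      have hdis : Disjoint (R : Subgroup N) (P : Subgroup N) :=
        IsPGroup.disjoint_of_ne q 2 hq2 _ _ R.isPGroup' P.isPGroup'
      intro y hy
      rw [hK, Subgroup.mem_subgroupOf, Subgroup.mem_centralizer_iff]
      intro z hz
      exact (Subgroup.commute_of_normal_of_disjoint _ _ hRn hPn hdis y z
        (hR ⟨y, hy, rfl⟩) hz).symm
    exact Q.not_dvd_index (hqd.trans (Subgroup.index_dvd_of_le hQK))
  refine ⟨Nat.card H, hodd, ?_⟩
  let f : P × H →* N := MonoidHom.noncommCoprod (P : Subgroup N).subtype H.subtype (by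
    intro x y
    exact Subgroup.mem_centralizer_iff.1 (hcomm y.2) x x.2)
  have hf : Function.Bijective f := hH
  exact ⟨(MulEquiv.ofBijective f hf).symm.trans
    (MulEquiv.prodCongr (MulEquiv.refl _) (zmodCyclicMulEquiv hcyc).symm)⟩

lemma centralizer_le_fit {G : Type} [Group G] (hsol : Group.IsSolvable G) (Fit : Subgroup G)
    (hFit : IsGreatest {N : Subgroup G | N.Normal ∧ Group.IsNilpotent ↥N} Fit) :
    Subgroup.centralizer (Fit : Set G) ≤ Fit := by
  classical
  have hFn : Fit.Normal := hFit.1.1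
  let C := Subgroup.centralizer (Fit : Set G)
  let D : ℕ → Subgroup G := fun k => Nat.rec C (fun _ K => ⁅K, K⁆) k
  have hD0 : D 0 = C := rfl
  have hDs : ∀ k, D (k + 1) = ⁅D k, D k⁆ := fun k => rfl
  have hcn : ∀ K : Subgroup G, K.Normal → (⁅K, K⁆ : Subgroup G).Normal :=
    fun K _ => inferInstance
  have hcl : ∀ K : Subgroup G, K.Normal → (⁅K, K⁆ : Subgroup G) ≤ K :=
    fun K _ => Subgroup.commutator_le_left K K
  have hDn : ∀ k, (D k).Normal := by
    intro k
    induction k with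
    | zero => rw [hD0]; infer_instance
    | succ k ih => rw [hDs]; exact hcn _ ih
  have hDC : ∀ k, D k ≤ C := by
    intro k
    induction k with
    | zero => exact le_rfl
    | succ k ih => rw [hDs]; exact (hcl _ (hDn k)).trans ih
  have hDd : ∀ k, D k ≤ derivedSeries G k := by
    intro k
    induction k with
    | zero => simp
    | succ k ih => rw [hDs, derivedSeries_succ]; exact Subgroup.commutator_mono ih ih
  have hex : ∃ k, D k ≤ Fit := by
    obtain ⟨n, hn⟩ := hsol.solvable
    exact ⟨n, (hDd n).trans (by rw [hn]; exact bot_le)⟩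
  obtain ⟨n, hn⟩ := hex
  induction n with
  | zero => exact hn
  | succ k ih =>
    have h1 : ⁅D k, D k⁆ ≤ Fit := hn
    refine ih (hFit.2 ⟨hDn k, ?_⟩)
    refine Subgroup.isNilpotent_of_lowerCentralSeries_eq_bot (n := 2) ?_
    rw [Subgroup.lowerCentralSeries_succ, Subgroup.lowerCentralSeries_succ,
      Subgroup.lowerCentralSeries_zero, eq_bot_iff]
    refine (Subgroup.commutator_mono h1 (hDC k)).trans (le_of_eq ?_)
    rw [Subgroup.commutator_comm, Subgroup.commutator_eq_bot_iff_le_centralizer]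

open scoped commutatorElement in
lemma fit_height_le {G : Type} [Group G] (hsol : Group.IsSolvable G) (Fit : Subgroup G)
    (hFit : IsGreatest {N : Subgroup G | N.Normal ∧ Group.IsNilpotent ↥N} Fit)
    (hcyc : IsCyclic Fit) : fittingHeight G ≤ 2 := by
  have hFn : Fit.Normal := hFit.1.1
  refine Nat.sInf_le ⟨![⊥, Fit, ⊤], rfl, rfl, ?_, ?_, ?_⟩
  · intro i
    fin_cases i
    · exact inferInstanceAs (⊥ : Subgroup G).Normal
    · exact hFn
    · exact inferInstanceAs (⊤ : Subgroup G).Normal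
  · intro i
    fin_cases i
    · exact bot_le (a := Fit)
    · exact le_top (a := Fit)
  · intro i
    fin_cases i
    · refine ⟨1, ?_⟩
      change ⁅Fit, Fit⁆ ≤ ⊥
      rw [Subgroup.commutator_le]
      intro x hx y hy
      rw [Subgroup.mem_bot, commutatorElement_eq_one_iff_mul_comm]
      have : CommGroup Fit := hcyc.commGroup
      obtain ⟨g, hg⟩ := hcyc.exists_generator
      obtain ⟨k, hk⟩ := hg ⟨x, hx⟩
      obtain ⟨l, hl⟩ := hg ⟨y, hy⟩
      have hk' : (g : G) ^ k = x := by simpa using congrArg Subtype.val hk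
      have hl' : (g : G) ^ l = y := by simpa using congrArg Subtype.val hl
      rw [← hk', ← hl', ← zpow_add, ← zpow_add, add_comm]
    · refine ⟨1, ?_⟩
      change ⁅(⊤ : Subgroup G), ⊤⁆ ≤ Fit
      refine le_trans ?_ (centralizer_le_fit hsol Fit hFit)
      rw [Subgroup.commutator_le]
      intro x _ y _
      obtain ⟨g, hg⟩ := hcyc.exists_generator
      have hex : ∀ z : G, ∃ r : ℤ, z * g * z⁻¹ = (g : G) ^ r := by
        intro z
        obtain ⟨r, hr⟩ := hg ⟨z * g * z⁻¹, hFn.conj_mem g g.2 z⟩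
        exact ⟨r, by simpa using (congrArg Subtype.val hr).symm⟩
      have h1 : x⁻¹ * (y⁻¹ * g * y⁻¹⁻¹) * x⁻¹⁻¹ = y⁻¹ * (x⁻¹ * g * x⁻¹⁻¹) * y⁻¹⁻¹ := by
        obtain ⟨r, hr⟩ := hex x⁻¹
        obtain ⟨s, hs⟩ := hex y⁻¹
        rw [hs, hr, ← conj_zpow, ← conj_zpow, hr, hs, ← zpow_mul, ← zpow_mul, mul_comm]
      have h2 : ⁅x, y⁆ * g = g * ⁅x, y⁆ := by
        rw [commutatorElement_def]
        calc x * y * x⁻¹ * y⁻¹ * g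
            = x * y * (x⁻¹ * (y⁻¹ * g * y⁻¹⁻¹) * x⁻¹⁻¹) * x⁻¹ * y⁻¹ := by group
          _ = g * (x * y * x⁻¹ * y⁻¹) := by rw [h1]; group
      rw [Subgroup.mem_centralizer_iff]
      intro z hz
      obtain ⟨k, hk⟩ := hg ⟨z, hz⟩
      have hk' : (g : G) ^ k = z := by simpa using congrArg Subtype.val hk
      rw [← hk']
      exact (Commute.zpow_right (show Commute ⁅x, y⁆ (g : G) from h2) k).symm

theorem stmt_13 {G : Type} [Group G] [Finite G] {F : Type} [Field F] {V : Type}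
    [AddCommGroup V] [Module F V] [Finite V] [Nontrivial V]
    (ρ : G →* (V ≃ₗ[F] V)) (hfaithful : Function.Injective ρ)
    (hfpf : ∀ g : G, g ≠ 1 → ∀ v : V, v ≠ 0 → ρ g v ≠ v)
    (hsol : IsSolvable G) (hht : 3 ≤ fittingHeight G)
    (Fit : Subgroup G)
    (hFit : IsGreatest {N : Subgroup G | N.Normal ∧ Group.IsNilpotent ↥N} Fit) :
    ∃ k m : ℕ, 1 ≤ k ∧ Odd m ∧
      Nonempty (↥Fit ≃* QuaternionGroup (2 ^ k) × Multiplicative (ZMod m)) := by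
  have hab : AbCyc Fit := (abCyc_of_fpf ρ hfpf).sub Fit
  have hnil : Group.IsNilpotent Fit := hFit.1.2
  have : Fact (Nat.Prime 2) := ⟨Nat.prime_two⟩
  by_cases hall : ∀ P : Sylow 2 Fit, IsCyclic P
  · exfalso
    have hZ : IsZGroup Fit := by
      refine ⟨fun p hp Q => ?_⟩
      have : Fact p.Prime := ⟨hp⟩
      rcases hp.eq_two_or_odd' with rfl | hpo
      · exact hall Q
      · exact odd_cyclic (hab.sub Q) hpo Q.isPGroup'
    have := fit_height_le hsol Fit hFit inferInstance
    omega
  · push Not at hall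
    obtain ⟨P, hP⟩ := hall
    obtain ⟨k, hk, ⟨e⟩⟩ := (two_group (hab.sub P) P.isPGroup').resolve_left hP
    obtain ⟨m, hm, ⟨f⟩⟩ := nilp_decomp hab P
    exact ⟨k, m, hk, hm, ⟨f.trans (MulEquiv.prodCongr e.symm (MulEquiv.refl _))⟩⟩
end
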